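/- Let N = (P,T,F,Var) be a UDPN over a countably infinite data domain D and let i, f be ℚ-markings. If f is ℚ-reachable from i, then there exists a ℚ-run ρ such that i →ρ_ℚ f and |dval(ρ)| ≤ |dval(i) ∪ dval(f)| + 1 + maxvars(N). -/

import Mathlib

open Finset

noncomputable section
open scoped Classical

/-- An unordered data Petri net over places `P`, transitions `T`, variables `V`,
with countably infinite data domain `D = ℕ`.
`pre p t` is the function `F(p,t) : V → ℕ` and `post t p` is `F(t,p) : V → ℕ`. -/
structure UDPN (P T V : Type) where
  pre : P → T → V → ℕ
  post : T → P → V → ℕ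

/-- An X-step `(c, t, π)`: coefficient, transition and mode. -/
structure Step (T V : Type) where
  c : ℚ
  t : T
  π : V → ℕ

variable {P T V : Type} [Fintype P] [Fintype T] [Fintype V]

/-- The `P × V` rational matrix `F(•,t)`. -/
def preMat (N : UDPN P T V) (t : T) (p : P) (x : V) : ℚ := (N.pre p t x : ℚ)

/-- The displacement `Δ(t) = F(t,•) − F(•,t)` as a `P × V` rational matrix. -/
def delta (N : UDPN P T V) (t : T) (p : P) (x : V) : ℚ :=
  (N.post t p x : ℚ) - (N.pre p t x : ℚ)

/-- `A ∘ π⁻¹`: the `P × ℕ` matrix with `(A∘π⁻¹)(p,α) = A(p,x)` if `α = π x`,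
and `0` if `α` is outside the range of `π`. (For injective `π` the sum has at
most one nonzero summand.) -/
def compInv (A : P → V → ℚ) (π : V → ℕ) (p : P) (α : ℕ) : ℚ :=
  ∑ x : V, if π x = α then A p x else 0

/-- Only finitely many nonzero columns. -/
def FinCols (m : P → ℕ → ℚ) : Prop := {α : ℕ | ∃ p, m p α ≠ 0}.Finite

/-- `IsMarking pos m`: `m` is an X-marking; `pos = true` corresponds to `X = ℚ⁺`
(all entries nonnegative), `pos = false` to `X = ℚ`. -/
def IsMarking (pos : Bool) (m : P → ℕ → ℚ) : Prop :=
  FinCols m ∧ (pos = true → ∀ p α, 0 ≤ m p α)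

/-- Data values of a marking. -/
def dvalM (m : P → ℕ → ℚ) : Set ℕ := {α | ∃ p, m p α ≠ 0}

/-- A valid X-step: nonnegative coefficient and injective mode.  -/
def IsStep (s : Step T V) : Prop := 0 ≤ s.c ∧ Function.Injective s.π

/-- A valid X-run: a finite sequence of X-steps. -/
def IsRun (ρ : List (Step T V)) : Prop := ∀ s ∈ ρ, IsStep s

/-- The effect `c · (Δ(t) ∘ π⁻¹)` of a step. -/
def stepEffect (N : UDPN P T V) (s : Step T V) (p : P) (α : ℕ) : ℚ :=
  s.c * compInv (delta N s.t) s.π p α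

/-- The effect `Δ(ρ)` of a run. -/
def runEffect (N : UDPN P T V) (ρ : List (Step T V)) (p : P) (α : ℕ) : ℚ :=
  (ρ.map fun s => stepEffect N s p α).sum

/-- A step `(c,t,π)` is fireable at `m` if `m − c·(F(•,t)∘π⁻¹)` is again an
X-marking: finitely many nonzero columns and (when `pos`) nonnegative entries. -/
def stepFireable (pos : Bool) (N : UDPN P T V) (m : P → ℕ → ℚ) (s : Step T V) : Prop :=
  FinCols (fun p α => m p α - s.c * compInv (preMat N s.t) s.π p α) ∧
  (pos = true → ∀ p α, 0 ≤ m p α - s.c * compInv (preMat N s.t) s.π p α)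

/-- A run is fireable at `m` if each step is fireable at the corresponding
intermediate marking. -/
def runFireable (pos : Bool) (N : UDPN P T V) : (P → ℕ → ℚ) → List (Step T V) → Prop
  | _, [] => True
  | m, s :: ρ => stepFireable pos N m s ∧
      runFireable pos N (fun p α => m p α + stepEffect N s p α) ρ

/-- `m →ρ_X m'` : `ρ` is fireable at `m` and `m' = m + Δ(ρ)`. -/
def Reaches (pos : Bool) (N : UDPN P T V) (i : P → ℕ → ℚ) (ρ : List (Step T V))
    (f : P → ℕ → ℚ) : Prop :=
  runFireable pos N i ρ ∧ f = fun p α => i p α + runEffect N ρ p α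

/-- `f` is X-reachable from `i`. -/
def Reach (pos : Bool) (N : UDPN P T V) (i f : P → ℕ → ℚ) : Prop :=
  ∃ ρ, IsRun ρ ∧ Reaches pos N i ρ f

/-- `vars(t)`. -/
def varsOf (N : UDPN P T V) (t : T) : Set V :=
  {x | ∃ p, N.pre p t x ≠ 0 ∨ N.post t p x ≠ 0}

/-- `maxvars(N) = max_{t ∈ T} |vars(t)|` (0 if `T` is empty). -/
def maxvars (N : UDPN P T V) : ℕ :=
  Finset.univ.sup fun t : T => (varsOf N t).ncard

/-- `dval(ρ)`: the data values used by a run. -/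
def runDval (N : UDPN P T V) (ρ : List (Step T V)) : Set ℕ :=
  {α | ∃ s ∈ ρ, ∃ x ∈ varsOf N s.t, s.π x = α}
/-- For `α ∈ E`: the least element of `{β ∈ E | β > α}` if nonempty, else `min E`. -/
def nextE (E : Finset ℕ) (α : ℕ) : ℕ :=
  if h : (E.filter fun β => α < β).Nonempty then (E.filter fun β => α < β).min' h
  else if h' : E.Nonempty then E.min' h' else 0

/-- The inverse of `nextE` on `E`: the greatest element of `{γ ∈ E | γ < β}` if
nonempty, else `max E`. -/
def prevE (E : Finset ℕ) (β : ℕ) : ℕ :=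
  if h : (E.filter fun γ => γ < β).Nonempty then (E.filter fun γ => γ < β).max' h
  else if h' : E.Nonempty then E.max' h' else 0

/-- The mode `π'` of `rot(E,ω)`, characterized by: the permutation matrix `P'` of
`π'` satisfies `P'(•,α) = P(•,α)` for `α ∉ E` and `P'(•,α) = P(•, nextE α)` for
`α ∈ E` (i.e. `π' x = α ↔ π x = nextE α` for `α ∈ E`). -/
def rotMode {V : Type} (E : Finset ℕ) (π : V → ℕ) (x : V) : ℕ :=
  if π x ∈ E then prevE E (π x) else π x

/-- `rot(E,ω)`. -/
def rotStep (E : Finset ℕ) (s : Step T V) : Step T V := ⟨s.c, s.t, rotMode E s.π⟩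

/-- The uniformization `U(E,ω)`: the concatenation
`rot^0(E, ω/|E|) ⋯ rot^{|E|−1}(E, ω/|E|)`. -/
def uniformize (E : Finset ℕ) (s : Step T V) : List (Step T V) :=
  (List.range E.card).map fun k => (rotStep E)^[k] ⟨s.c / (E.card : ℚ), s.t, s.π⟩

/-- Column `α` of `Δ(t)·P_π` is zero. -/
def zeroCol (N : UDPN P T V) (s : Step T V) (α : ℕ) : Prop :=
  ∀ p, compInv (delta N s.t) s.π p α = 0

/-- The transposition of the data values `α` and `β`. -/
def swapVal (α β γ : ℕ) : ℕ := if γ = α then β else if γ = β then α else γ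

/-- `R(α,E,ω)`: if column `α` of `Δ(t)·P_π` is zero then `ω` itself; otherwise the
step whose permutation matrix is obtained from `P_π` by exchanging columns `α` and
`β`, where `β` is the least datum in `E` whose column of `Δ(t)·P_π` is zero. -/
def replaceStep (N : UDPN P T V) (α : ℕ) (E : Finset ℕ) (s : Step T V) : Step T V :=
  if zeroCol N s α then s
  else if h : (E.filter fun β => zeroCol N s β).Nonempty then
    ⟨s.c, s.t, fun x => swapVal α ((E.filter fun β => zeroCol N s β).min' h) (s.π x)⟩
  else s

/-- `dec(E,α,σ)`: the concatenation `U(E,R(α,E,σ(1))) ⋯ U(E,R(α,E,σ(n)))`. -/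
def decRun (N : UDPN P T V) (α : ℕ) (E : Finset ℕ) (σ : List (Step T V)) :
    List (Step T V) :=
  σ.flatMap fun s => uniformize E (replaceStep N α E s)

/-- A histogram of order `q`: a `V × ℕ` matrix with nonnegative rational entries
and finitely many nonzero columns, every row summing to `q` and every column
summing to at most `q`. -/
def IsHistogram (H : V → ℕ → ℚ) (q : ℚ) : Prop :=
  0 ≤ q ∧ (∀ x α, 0 ≤ H x α) ∧ ({α | ∃ x, H x α ≠ 0}).Finite ∧
  (∀ x, ∑ᶠ α, H x α = q) ∧ (∀ α, ∑ x : V, H x α ≤ q)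

/-- `col(H)`: the nonzero columns of `H`. -/
def colH (H : V → ℕ → ℚ) : Set ℕ := {α | ∃ x, H x α ≠ 0}

/-- The permutation matrix `P_π` of a mode `π`. -/
def permMat {V : Type} (π : V → ℕ) (x : V) (α : ℕ) : ℚ := if π x = α then 1 else 0

/-- `Pre(ρ)`: pairs `(p,α)` of tokens consumed by the run `ρ`. -/
def preSet (N : UDPN P T V) (ρ : List (Step T V)) : Set (P × ℕ) :=
  {pa | ∃ s ∈ ρ, ∃ x, 0 < N.pre pa.1 s.t x ∧ s.π x = pa.2}

/-- `Post(ρ)`: pairs `(p,α)` of tokens produced by the run `ρ`. -/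
def postSet (N : UDPN P T V) (ρ : List (Step T V)) : Set (P × ℕ) :=
  {pa | ∃ s ∈ ρ, ∃ x, 0 < N.post s.t pa.1 x ∧ s.π x = pa.2}

/-- A loop-less UDPN: `PrePlace(t) ∩ PostPlace(t) = ∅` for every transition. -/
def IsLoopless (N : UDPN P T V) : Prop :=
  ∀ t : T, ¬ ∃ p : P, (∃ x, 0 < N.pre p t x) ∧ (∃ x, 0 < N.post t p x)

/-!
Two facts drive the proof. First, every run over `ℚ` is fireable, so only its effect matters.
Secondly, renaming the data of a step by a permutation `τ` of `ℕ` just moves the columns of its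
effect along `τ`.

Let `S` be the set of nonzero columns of `Δ(ρ) = f - i`, and let `E` be disjoint from `S` with
`maxvars N` elements. Rename the data of each step of `ρ` by a permutation that fixes `S` pointwise
and moves the data used by that step into `S ∪ E`. Neither the columns in `S` nor the sum of all
columns changes. The new columns in `E` therefore add up to zero, and averaging the new run over
all permutations of `E` makes each of them zero.
-/

lemma exists_perm_fixing_forall_mem_or_mem {α : Type*} {A S E : Finset α} (hSE : Disjoint S E)
    (hA : #A ≤ #E) :
    ∃ τ : Equiv.Perm α, (∀ a ∈ S, τ a = a) ∧ ∀ a ∈ A, τ a ∈ S ∨ τ a ∈ E := by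
  obtain ⟨e⟩ : Nonempty ((A \ S : Finset α) ↪ E) := Function.Embedding.nonempty_of_card_le <| by
    simpa only [Fintype.card_coe] using (card_le_card sdiff_subset).trans hA
  obtain ⟨τ, hτ⟩ := Equiv.Perm.exists_extending_pair
    (Sum.elim Subtype.val Subtype.val : S ⊕ (A \ S : Finset α) → α)
    (Sum.elim Subtype.val fun a => e a)
    (Subtype.val_injective.sumElim Subtype.val_injective fun a b h =>
      (mem_sdiff.1 b.2).2 (h ▸ a.2))
    (Subtype.val_injective.sumElim (Subtype.val_injective.comp e.injective) fun a b h =>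
      disjoint_left.1 hSE a.2 (h ▸ (e b).2))
  have fixes_S : ∀ a ∈ S, τ a = a := fun a ha => hτ (.inl ⟨a, ha⟩)
  refine ⟨τ, fixes_S, fun a ha => ?_⟩
  by_cases haS : a ∈ S
  · exact .inl (by rwa [fixes_S a haS])
  · have hτa : τ a = e ⟨a, mem_sdiff.2 ⟨ha, haS⟩⟩ := hτ (.inr ⟨a, mem_sdiff.2 ⟨ha, haS⟩⟩)
    exact .inr (hτa ▸ (e _).2)

section Averaging

open MulAction
open scoped BigOperators

lemma expect_smul_eq_expect {G X M : Type*} [Group G] [Fintype G] [Fintype X] [MulAction G X]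
    [IsPretransitive G X] [AddCommMonoid M] [Module ℚ≥0 M] (f : X → M) (x : X) :
    𝔼 g : G, f (g • x) = 𝔼 y, f y := by
  have : Nonempty X := ⟨x⟩
  have orbit_average_eq (y : X) : 𝔼 g : G, f (g • y) = 𝔼 g : G, f (g • x) := by
    obtain ⟨h, rfl⟩ := exists_smul_eq G x y
    exact Fintype.expect_equiv (Equiv.mulRight h) _ _ fun g => by simp [mul_smul]
  calc 𝔼 g : G, f (g • x) = 𝔼 y, 𝔼 g : G, f (g • y) := by
        simp only [orbit_average_eq, Fintype.expect_const]
    _ = 𝔼 g : G, 𝔼 y, f (g • y) := expect_comm _ _ _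
    _ = 𝔼 _g : G, 𝔼 y, f y :=
        expect_congr rfl fun g _ => Fintype.expect_equiv (MulAction.toPerm g) _ _ fun _ => rfl
    _ = 𝔼 y, f y := Fintype.expect_const _

end Averaging

section Effects

variable {P T V : Type}

lemma delta_eq_zero_of_notMem_varsOf {N : UDPN P T V} {t : T} {x : V} (hx : x ∉ varsOf N t)
    (p : P) : delta N t p x = 0 := by
  simp only [varsOf, Set.mem_ofPred_eq, not_exists, not_or, not_not] at hx
  simp [delta, hx p]

lemma dvalM_sub_subset (m m' : P → ℕ → ℚ) : dvalM (m - m') ⊆ dvalM m' ∪ dvalM m := by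
  rintro α ⟨p, hp⟩
  by_cases h : m' p α = 0
  · exact .inr ⟨p, by simpa only [Pi.sub_apply, h, sub_zero] using hp⟩
  · exact .inl ⟨p, h⟩

lemma FinCols.hasFiniteSupport {m : P → ℕ → ℚ} (hm : FinCols m) (p : P) :
    (m p).HasFiniteSupport :=
  Set.Finite.subset hm fun _ hα => ⟨p, hα⟩

lemma FinCols.add {m m' : P → ℕ → ℚ} (hm : FinCols m) (hm' : FinCols m') :
    FinCols fun p α => m p α + m' p α := by
  refine (hm.union hm').subset ?_
  rintro α ⟨p, hp⟩
  by_cases h : m p α = 0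
  · exact .inr ⟨p, by simpa only [h, zero_add] using hp⟩
  · exact .inl ⟨p, h⟩

variable [Fintype V]

lemma compInv_eq_zero_of_notMem_range (A : P → V → ℚ) {π : V → ℕ} {α : ℕ}
    (hα : α ∉ Set.range π) (p : P) : compInv A π p α = 0 :=
  sum_eq_zero fun x _ => if_neg fun h => hα ⟨x, h⟩

lemma compInv_perm_comp (A : P → V → ℚ) (τ : Equiv.Perm ℕ) (π : V → ℕ) (p : P) (α : ℕ) :
    compInv A (τ ∘ π) p α = compInv A π p (τ.symm α) := by
  simp only [compInv, Function.comp_apply, Equiv.eq_symm_apply]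

lemma finCols_mul_compInv (c : ℚ) (A : P → V → ℚ) (π : V → ℕ) :
    FinCols fun p α => c * compInv A π p α :=
  (Set.finite_range π).subset fun _ ⟨p, hp⟩ => by_contra fun hα =>
    hp (mul_eq_zero_of_right c (compInv_eq_zero_of_notMem_range A hα p))

lemma runFireable_false (N : UDPN P T V) (ρ : List (Step T V)) {m : P → ℕ → ℚ}
    (hm : FinCols m) : runFireable false N m ρ := by
  induction ρ generalizing m with
  | nil => trivial
  | cons s ρ ih =>
    refine ⟨⟨?_, by simp⟩, ih (hm.add (finCols_mul_compInv s.c (delta N s.t) s.π))⟩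
    simpa only [neg_mul, ← sub_eq_add_neg] using
      hm.add (finCols_mul_compInv (-s.c) (preMat N s.t) s.π)

lemma runEffect_cons (N : UDPN P T V) (s : Step T V) (ρ : List (Step T V)) (p : P) (α : ℕ) :
    runEffect N (s :: ρ) p α = stepEffect N s p α + runEffect N ρ p α :=
  rfl

lemma runEffect_flatMap {ι : Type*} (N : UDPN P T V) (l : List ι) (r : ι → List (Step T V))
    (p : P) (α : ℕ) :
    runEffect N (l.flatMap r) p α = (l.map fun a => runEffect N (r a) p α).sum := by
  induction l with
  | nil => rfl
  | cons a l ih =>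
    rw [List.flatMap_cons, List.map_cons, List.sum_cons, ← ih]
    simp only [runEffect, List.map_append, List.sum_append]

lemma finCols_stepEffect (N : UDPN P T V) (s : Step T V) : FinCols (stepEffect N s) :=
  finCols_mul_compInv s.c (delta N s.t) s.π

lemma finCols_runEffect (N : UDPN P T V) (ρ : List (Step T V)) : FinCols (runEffect N ρ) := by
  induction ρ with
  | nil => simp [FinCols, runEffect]
  | cons s ρ ih => exact (finCols_stepEffect N s).add ih

lemma runEffect_eq_zero_of_notMem_runDval {N : UDPN P T V} {ρ : List (Step T V)} {α : ℕ}
    (hα : α ∉ runDval N ρ) (p : P) : runEffect N ρ p α = 0 := by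
  refine List.sum_eq_zero fun q hq => ?_
  obtain ⟨s, hs, rfl⟩ := List.mem_map.1 hq
  refine mul_eq_zero_of_right _ (sum_eq_zero fun x _ => ?_)
  split_ifs with hx
  · exact delta_eq_zero_of_notMem_varsOf (fun hvar => hα ⟨s, hs, x, hvar, hx⟩) p
  · rfl

end Effects

section Renaming

variable {P T V : Type}

/-- The step `s` with its data renamed along the permutation `τ`. -/
def Step.rename (τ : Equiv.Perm ℕ) (s : Step T V) : Step T V := ⟨s.c, s.t, τ ∘ s.π⟩

/-- The step `s` with its coefficient multiplied by `q`. -/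
def Step.scale (q : ℚ) (s : Step T V) : Step T V := ⟨q * s.c, s.t, s.π⟩

lemma IsStep.rename {s : Step T V} (hs : IsStep s) (τ : Equiv.Perm ℕ) : IsStep (s.rename τ) :=
  ⟨hs.1, τ.injective.comp hs.2⟩

lemma IsStep.scale {s : Step T V} (hs : IsStep s) {q : ℚ} (hq : 0 ≤ q) : IsStep (s.scale q) :=
  ⟨mul_nonneg hq hs.1, hs.2⟩

variable [Fintype V] (N : UDPN P T V)

lemma stepEffect_rename (τ : Equiv.Perm ℕ) (s : Step T V) (p : P) (α : ℕ) :
    stepEffect N (s.rename τ) p α = stepEffect N s p (τ.symm α) :=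
  congrArg (s.c * ·) (compInv_perm_comp _ τ s.π p α)

lemma stepEffect_scale (q : ℚ) (s : Step T V) (p : P) (α : ℕ) :
    stepEffect N (s.scale q) p α = q * stepEffect N s p α :=
  mul_assoc q s.c _

lemma runEffect_map_rename_of_fixed (τ : Step T V → Equiv.Perm ℕ) (ρ : List (Step T V)) (p : P)
    {α : ℕ} (hα : ∀ s, τ s α = α) :
    runEffect N (ρ.map fun s => s.rename (τ s)) p α = runEffect N ρ p α := by
  simp only [runEffect, List.map_map, Function.comp_def, stepEffect_rename,
    (Equiv.symm_apply_eq _).2 (hα _).symm]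

lemma finsum_runEffect_map_rename (τ : Step T V → Equiv.Perm ℕ) (ρ : List (Step T V)) (p : P) :
    ∑ᶠ α, runEffect N (ρ.map fun s => s.rename (τ s)) p α = ∑ᶠ α, runEffect N ρ p α := by
  induction ρ with
  | nil => rfl
  | cons s ρ ih =>
    simp only [List.map_cons, runEffect_cons]
    rw [finsum_add_distrib ((finCols_stepEffect N _).hasFiniteSupport p)
        ((finCols_runEffect N _).hasFiniteSupport p),
      finsum_add_distrib ((finCols_stepEffect N s).hasFiniteSupport p)
        ((finCols_runEffect N ρ).hasFiniteSupport p), ih]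
    simp only [stepEffect_rename, finsum_comp_equiv]

end Renaming

section Symmetrization

open scoped BigOperators

variable {P T V : Type}

/-- The average of the run `ρ` over all permutations of the data in `E`. -/
def symmetrize (E : Finset ℕ) (ρ : List (Step T V)) : List (Step T V) :=
  (univ : Finset (Equiv.Perm E)).toList.flatMap fun σ =>
    ρ.map fun s => (s.rename (Equiv.Perm.ofSubtype σ)).scale (Fintype.card (Equiv.Perm E) : ℚ)⁻¹

lemma IsRun.symmetrize {ρ : List (Step T V)} (hρ : IsRun ρ) (E : Finset ℕ) :
    IsRun (symmetrize E ρ) := by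
  intro s' hs'
  obtain ⟨σ, -, hs'⟩ := List.mem_flatMap.1 hs'
  obtain ⟨s, hs, rfl⟩ := List.mem_map.1 hs'
  exact ((hρ s hs).rename _).scale (by positivity)

lemma runDval_symmetrize_subset (N : UDPN P T V) (E : Finset ℕ) (ρ : List (Step T V)) :
    runDval N (symmetrize E ρ) ⊆ runDval N ρ ∪ E := by
  rintro _ ⟨s', hs', x, hx, rfl⟩
  obtain ⟨σ, -, hs'⟩ := List.mem_flatMap.1 hs'
  obtain ⟨s, hs, rfl⟩ := List.mem_map.1 hs'
  change Equiv.Perm.ofSubtype σ (s.π x) ∈ runDval N ρ ∪ (E : Set ℕ)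
  by_cases hE : s.π x ∈ E
  · rw [Equiv.Perm.ofSubtype_apply_of_mem σ hE]
    exact .inr (σ _).2
  · rw [Equiv.Perm.ofSubtype_apply_of_not_mem σ hE]
    exact .inl ⟨s, hs, x, hx, rfl⟩

variable [Fintype V] (N : UDPN P T V)

lemma runEffect_symmetrize (E : Finset ℕ) (ρ : List (Step T V)) (p : P) (α : ℕ) :
    runEffect N (symmetrize E ρ) p α =
      𝔼 σ : Equiv.Perm E, runEffect N ρ p (Equiv.Perm.ofSubtype σ α) := by
  calc runEffect N (symmetrize E ρ) p α
      = ∑ σ : Equiv.Perm E, (Fintype.card (Equiv.Perm E) : ℚ)⁻¹ *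
          runEffect N ρ p ((Equiv.Perm.ofSubtype σ).symm α) := by
        rw [symmetrize, runEffect_flatMap, sum_map_toList]
        simp only [runEffect, List.map_map, Function.comp_def, stepEffect_scale,
          stepEffect_rename, List.sum_map_mul_left]
    _ = 𝔼 σ : Equiv.Perm E, runEffect N ρ p ((Equiv.Perm.ofSubtype σ).symm α) := by
        rw [← mul_sum, Fintype.expect_eq_sum_div_card, inv_mul_eq_div]
    _ = 𝔼 σ : Equiv.Perm E, runEffect N ρ p (Equiv.Perm.ofSubtype σ α) :=
        Fintype.expect_equiv (Equiv.inv _) _ _ fun σ => by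
          rw [Equiv.inv_apply, map_inv, Equiv.Perm.inv_def]

lemma runEffect_symmetrize_of_notMem {E : Finset ℕ} (ρ : List (Step T V)) (p : P) {α : ℕ}
    (hα : α ∉ E) : runEffect N (symmetrize E ρ) p α = runEffect N ρ p α := by
  simp only [runEffect_symmetrize, Equiv.Perm.ofSubtype_apply_of_not_mem _ hα,
    Fintype.expect_const]

lemma runEffect_symmetrize_of_mem {E : Finset ℕ} (ρ : List (Step T V)) (p : P) {α : ℕ}
    (hα : α ∈ E) : runEffect N (symmetrize E ρ) p α = 𝔼 β ∈ E, runEffect N ρ p β := by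
  simp only [runEffect_symmetrize, Equiv.Perm.ofSubtype_apply_of_mem _ hα]
  calc 𝔼 σ : Equiv.Perm E, runEffect N ρ p (σ ⟨α, hα⟩)
      = 𝔼 β : E, runEffect N ρ p β :=
        expect_smul_eq_expect (G := Equiv.Perm E) (fun β : E => runEffect N ρ p β) ⟨α, hα⟩
    _ = 𝔼 β ∈ E, runEffect N ρ p β := by
        rw [Fintype.expect_eq_sum_div_card, expect_eq_sum_div_card, Fintype.card_coe,
          sum_coe_sort]

end Symmetrization

section DataBound

variable {P T V : Type} [Fintype T]

lemma ncard_varsOf_le_maxvars (N : UDPN P T V) (t : T) : (varsOf N t).ncard ≤ maxvars N :=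
  le_sup (f := fun t => (varsOf N t).ncard) (mem_univ t)

lemma exists_perm_fixing_forall_varsOf_mem_or_mem [Finite V] (N : UDPN P T V)
    {S E : Finset ℕ} (hSE : Disjoint S E) (hE : maxvars N ≤ #E) (s : Step T V) :
    ∃ τ : Equiv.Perm ℕ, (∀ α ∈ S, τ α = α) ∧
      ∀ x ∈ varsOf N s.t, τ (s.π x) ∈ S ∨ τ (s.π x) ∈ E := by
  have hvars : (varsOf N s.t).Finite := Set.toFinite _
  have card_le : #(hvars.toFinset.image s.π) ≤ #E := calc
    #(hvars.toFinset.image s.π) ≤ (varsOf N s.t).ncard :=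
      card_image_le.trans_eq (Set.ncard_eq_toFinset_card _ hvars).symm
    _ ≤ #E := (ncard_varsOf_le_maxvars N s.t).trans hE
  obtain ⟨τ, fixes_S, maps_image⟩ := exists_perm_fixing_forall_mem_or_mem hSE card_le
  exact ⟨τ, fixes_S, fun x hx => maps_image _ (mem_image_of_mem _ (hvars.mem_toFinset.2 hx))⟩

variable [Fintype V]

lemma exists_isRun_runDval_subset_union (N : UDPN P T V) {S E : Finset ℕ} (hSE : Disjoint S E)
    (hE : maxvars N ≤ #E) {ρ : List (Step T V)} (hρ : IsRun ρ) :
    ∃ ρ', IsRun ρ' ∧ runDval N ρ' ⊆ S ∪ E ∧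
      (∀ p, ∀ α ∈ S, runEffect N ρ' p α = runEffect N ρ p α) ∧
      ∀ p, ∑ᶠ α, runEffect N ρ' p α = ∑ᶠ α, runEffect N ρ p α := by
  choose τ fixes_S maps_vars using exists_perm_fixing_forall_varsOf_mem_or_mem N hSE hE
  refine ⟨ρ.map fun s => s.rename (τ s), List.forall_mem_map.2 fun s hs => (hρ s hs).rename _, ?_,
    fun p α hα => runEffect_map_rename_of_fixed N τ ρ p fun s => fixes_S s α hα,
    finsum_runEffect_map_rename N τ ρ⟩
  rintro _ ⟨s', hs', x, hx, rfl⟩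
  obtain ⟨s, -, rfl⟩ := List.mem_map.1 hs'
  exact maps_vars s x hx

lemma exists_isRun_runEffect_eq (N : UDPN P T V) {S E : Finset ℕ} (hSE : Disjoint S E)
    (hE : maxvars N ≤ #E) {ρ : List (Step T V)} (hρ : IsRun ρ) (hS : dvalM (runEffect N ρ) ⊆ S) :
    ∃ ρ', IsRun ρ' ∧ runEffect N ρ' = runEffect N ρ ∧ runDval N ρ' ⊆ S ∪ E := by
  obtain ⟨ρ', hρ', hdval, eq_on_S, finsum_eq⟩ :=
    exists_isRun_runDval_subset_union N hSE hE hρ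
  have eq_zero {p : P} {α : ℕ} (hα : α ∉ S) : runEffect N ρ p α = 0 :=
    by_contra fun h => hα (hS ⟨p, h⟩)
  have sum_E_eq_zero (p : P) : ∑ α ∈ E, runEffect N ρ' p α = 0 := by
    have total' : ∑ᶠ α, runEffect N ρ' p α = ∑ α ∈ S ∪ E, runEffect N ρ' p α :=
      finsum_eq_sum_of_support_subset _ fun α hα => by
        rw [coe_union]
        exact by_contra fun h =>
          hα (runEffect_eq_zero_of_notMem_runDval (fun hd => h (hdval hd)) p)
    have total : ∑ᶠ α, runEffect N ρ p α = ∑ α ∈ S, runEffect N ρ p α :=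
      finsum_eq_sum_of_support_subset _ fun α hα => hS ⟨p, hα⟩
    have h := finsum_eq p
    rw [total', total, sum_union hSE, sum_congr rfl (eq_on_S p)] at h
    exact left_eq_add.1 h.symm
  refine ⟨symmetrize E ρ', hρ'.symmetrize E, ?_, (runDval_symmetrize_subset N E ρ').trans <|
    Set.union_subset hdval Set.subset_union_right⟩
  ext p α
  by_cases hαE : α ∈ E
  · rw [runEffect_symmetrize_of_mem N ρ' p hαE, expect_eq_sum_div_card, sum_E_eq_zero, zero_div,
      eq_zero (disjoint_right.1 hSE hαE)]
  rw [runEffect_symmetrize_of_notMem N ρ' p hαE]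
  by_cases hαS : α ∈ S
  · exact eq_on_S p α hαS
  · rw [eq_zero hαS, runEffect_eq_zero_of_notMem_runDval fun hd => (hdval hd).elim hαS hαE]

theorem q_reach_data_bound_general (N : UDPN P T V) {i f : P → ℕ → ℚ} (hi : IsMarking false i)
    (hreach : Reach false N i f) :
    ∃ ρ : List (Step T V), IsRun ρ ∧ Reaches false N i ρ f ∧
      (runDval N ρ).ncard ≤ (dvalM (f - i)).ncard + maxvars N := by
  obtain ⟨ρ, hρ, -, hf⟩ := hreach
  have effect_eq : runEffect N ρ = f - i := (sub_eq_of_eq_add' hf).symm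
  have hfin : (dvalM (f - i)).Finite := effect_eq ▸ finCols_runEffect N ρ
  obtain ⟨E, hES, hE⟩ := hfin.infinite_compl.exists_subset_card_eq (maxvars N)
  have hSE : Disjoint hfin.toFinset E :=
    disjoint_right.2 fun α hα hαS => hES hα (hfin.mem_toFinset.1 hαS)
  obtain ⟨ρ', hρ', heffect, hdval⟩ := exists_isRun_runEffect_eq N hSE hE.ge hρ
    (by rw [effect_eq, hfin.coe_toFinset])
  refine ⟨ρ', hρ', ⟨runFireable_false N ρ' hi.1, by rwa [heffect]⟩, ?_⟩
  calc (runDval N ρ').ncard ≤ #(hfin.toFinset ∪ E) := by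
        rw [← Set.ncard_coe_finset, coe_union]
        exact Set.ncard_le_ncard hdval
    _ ≤ #hfin.toFinset + #E := card_union_le _ _
    _ = (dvalM (f - i)).ncard + maxvars N := by rw [hE, Set.ncard_eq_toFinset_card _ hfin]

end DataBound

/-- If `f` is ℚ-reachable from `i`, then there is a ℚ-run `ρ`
with `i →ρ_ℚ f` and `|dval(ρ)| ≤ |dval(i) ∪ dval(f)| + 1 + maxvars(N)`. -/
theorem q_reach_data_bound
    (N : UDPN P T V) (i f : P → ℕ → ℚ)
    (hi : IsMarking false i) (hf : IsMarking false f)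
    (hreach : Reach false N i f) :
    ∃ ρ : List (Step T V), IsRun ρ ∧ Reaches false N i ρ f ∧
      (runDval N ρ).ncard ≤ (dvalM i ∪ dvalM f).ncard + 1 + maxvars N := by
  obtain ⟨ρ, hρ, hreaches, hcard⟩ := q_reach_data_bound_general N hi hreach
  have := Set.ncard_le_ncard (dvalM_sub_subset f i) (hi.1.union hf.1)
  exact ⟨ρ, hρ, hreaches, by lia⟩
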